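/- arXiv:2210.16150 — 2 statements merged into one kernel-verified Lean document; each statement's English description precedes it below -/
import Mathlib

section
/- Let u, v ∈ ℝ² be linearly independent and let P = {s·u + t·v : s, t ∈ [-1,1]} be the parallelogram with center at the origin spanned by u and v. If a, b, c ∈ P are points with a + b + c = 0 (so that the triangle conv{a,b,c} has its centroid at the centroid of P), and λ > 0 is such that P ⊆ λ·conv{a,b,c}, then λ ≥ 5/2. -/
open Pointwise

/-!
In the coordinates of `u` and `v`, the parallelogram is the square `[-1, 1]²`. Let `D` be the cross
product of `a` and `b`; the centroid condition gives the other two sides the same cross product.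
Crossing with `a - b` is a linear functional which equals `D` at `a` and `b`, equals `-2 D` at `c`,
and has the `ℓ¹`-norm of `a - b` as its maximum over the square. So if the triangle scaled by `lam`
covers the square, then every side has `ℓ¹`-length at most `|lam| |D|`.

On the other hand, some side has `ℓ¹`-length at least `5 / 2 * |D|`. In each coordinate, one vertex
balances the other two, which lie on the opposite side of `0`. If the same vertex does so in both
coordinates, even `3 |D|` is a lower bound. Otherwise the average length of some two sides is at
least `5 / 2 * |D|`, with equality for `a = (1, 0)`, `b = (-1/2, 1)`, `c = (-1/2, -1)`.
-/

section Cross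

variable {R : Type*} [CommRing R]

/-- The cross product of two vectors in the plane, as a linear functional of the second one, so that
it can be bounded on convex hulls. -/
def planeCross (p : R × R) : R × R →ₗ[R] R :=
  p.1 • LinearMap.snd R R R - p.2 • LinearMap.fst R R R

lemma planeCross_apply (p q : R × R) : planeCross p q = p.1 * q.2 - p.2 * q.1 := rfl

lemma neg_planeCross (p q : R × R) : -planeCross p q = planeCross q p := by
  simp only [planeCross_apply]
  ring

lemma planeCross_rotate {a b c : R × R} (hsum : a + b + c = 0) :
    planeCross b c = planeCross a b := by
  obtain rfl : c = -(a + b) := (neg_eq_of_add_eq_zero_right hsum).symm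
  simp only [planeCross_apply, Prod.fst_neg, Prod.snd_neg, Prod.fst_add, Prod.snd_add]
  ring

end Cross

section TaxicabNorm

variable {G : Type*} [AddCommGroup G] [LinearOrder G]

/-- The `ℓ¹`-norm on the plane, which is the support function of the square `[-1, 1]²`. -/
def taxicabNorm (p : G × G) : G := |p.1| + |p.2|

lemma taxicabNorm_sub_comm (p q : G × G) : taxicabNorm (p - q) = taxicabNorm (q - p) := by
  simp only [taxicabNorm, Prod.fst_sub, Prod.snd_sub, abs_sub_comm]

lemma eq_of_taxicabNorm_sub_nonpos [IsOrderedAddMonoid G] {p q : G × G}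
    (h : taxicabNorm (p - q) ≤ 0) : p = q := by
  obtain ⟨h₁, h₂⟩ := (add_eq_zero_iff_of_nonneg (abs_nonneg _) (abs_nonneg _)).1
    (h.antisymm (add_nonneg (abs_nonneg _) (abs_nonneg _)))
  exact Prod.ext (sub_eq_zero.1 (abs_eq_zero.1 h₁)) (sub_eq_zero.1 (abs_eq_zero.1 h₂))

end TaxicabNorm

section OrderedRing

variable {R : Type*} [CommRing R] [LinearOrder R] [IsStrictOrderedRing R]

lemma abs_planeCross_le (p q : R × R) : |planeCross p q| ≤ |p.1| * |q.2| + |p.2| * |q.1| := by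
  simpa only [planeCross_apply, abs_mul] using abs_sub (p.1 * q.2) (p.2 * q.1)

lemma mem_Icc_neg_one_one_iff_abs_le {p : R × R} :
    p ∈ Set.Icc (-1) 1 ↔ |p.1| ≤ 1 ∧ |p.2| ≤ 1 := by
  simp only [Set.mem_Icc, Prod.le_def, abs_le, Prod.fst_neg, Prod.snd_neg, Prod.fst_one,
    Prod.snd_one]
  tauto

lemma exists_mem_Icc_planeCross_eq_taxicabNorm (p : R × R) :
    ∃ q ∈ Set.Icc (-1) 1, planeCross p q = taxicabNorm p := by
  have exists_sign (x : R) : ∃ ε : R, |ε| = 1 ∧ x * ε = |x| := by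
    rcases abs_choice x with h | h
    · exact ⟨1, abs_one, by rw [h, mul_one]⟩
    · exact ⟨-1, by rw [abs_neg, abs_one], by rw [h, mul_neg_one]⟩
  obtain ⟨ε, hε, hpε⟩ := exists_sign p.1
  obtain ⟨δ, hδ, hpδ⟩ := exists_sign p.2
  refine ⟨(-δ, ε), mem_Icc_neg_one_one_iff_abs_le.2 ⟨by rw [abs_neg, hδ], hε.le⟩, ?_⟩
  rw [planeCross_apply, taxicabNorm, ← hpε, ← hpδ]
  ring

lemma abs_eq_add_or_of_add_eq_zero {x y z : R} (h : x + y + z = 0) :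
    |x| = |y| + |z| ∨ |y| = |z| + |x| ∨ |z| = |x| + |y| := by
  grind

lemma abs_sub_eq_add_of_abs_eq_add {x y z : R} (h : x + y + z = 0) (hx : |x| = |y| + |z|) :
    |x - y| = |x| + |y| ∧ |z - x| = |z| + |x| := by
  grind

lemma three_mul_abs_planeCross_le_of_abs_eq_add {a b c : R × R} {M : R} (hsum : a + b + c = 0)
    (ha₁ : |a.1| ≤ 1) (ha₂ : |a.2| ≤ 1)
    (hab : taxicabNorm (a - b) ≤ M) (hca : taxicabNorm (c - a) ≤ M)
    (h₁ : |a.1| = |b.1| + |c.1|) (h₂ : |a.2| = |b.2| + |c.2|) :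
    3 * |planeCross a b| ≤ M := by
  have hsum₁ : a.1 + b.1 + c.1 = 0 := congrArg Prod.fst hsum
  have hsum₂ : a.2 + b.2 + c.2 = 0 := congrArg Prod.snd hsum
  have sides : 3 * (|a.1| + |a.2|) ≤ 2 * M := by
    obtain ⟨hab₁, hca₁⟩ := abs_sub_eq_add_of_abs_eq_add hsum₁ h₁
    obtain ⟨hab₂, hca₂⟩ := abs_sub_eq_add_of_abs_eq_add hsum₂ h₂
    simp only [taxicabNorm, Prod.fst_sub, Prod.snd_sub] at hab hca
    linarith
  have cross : |planeCross a b| ≤ |a.1| * |a.2| :=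
    calc |planeCross a b| = |planeCross b c| := by rw [planeCross_rotate hsum]
      _ ≤ |b.1| * |c.2| + |b.2| * |c.1| := abs_planeCross_le b c
      _ ≤ (|b.1| + |c.1|) * (|b.2| + |c.2|) := by
        nlinarith [mul_nonneg (abs_nonneg b.1) (abs_nonneg b.2),
          mul_nonneg (abs_nonneg c.1) (abs_nonneg c.2)]
      _ = |a.1| * |a.2| := by rw [h₁, h₂]
  have product : 2 * (|a.1| * |a.2|) ≤ |a.1| + |a.2| := by
    linarith [mul_le_of_le_one_right (abs_nonneg a.1) ha₂,
      mul_le_of_le_one_left (abs_nonneg a.2) ha₁]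
  linarith

lemma abs_le_of_subset_smul_convexHull {E : Type*} [AddCommGroup E] [Module R E] {s t : Set E}
    {f : E →ₗ[R] R} {m lam : R} (hs : ∀ q ∈ s, -q ∈ s) (ht : ∀ q ∈ t, f q ≤ m)
    (hst : s ⊆ lam • convexHull R t) {q : E} (hq : q ∈ s) : |f q| ≤ |lam| * m := by
  have hull : convexHull R t ⊆ {z | f z ≤ m} :=
    convexHull_min ht (convex_halfSpace_le f.isLinear m)
  obtain ⟨z, hz, hzq⟩ := hst hq
  obtain ⟨w, hw, hwq⟩ := hst (hs q hq)
  have hfq : f q = lam * f z := by rw [← hzq, map_smul, smul_eq_mul]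
  have hfq' : -f q = lam * f w := by rw [← map_neg, ← hwq, map_smul, smul_eq_mul]
  rcases le_total 0 lam with h | h
  · rw [abs_of_nonneg h]
    exact abs_le'.2 ⟨hfq ▸ mul_le_mul_of_nonneg_left (hull hz) h,
      hfq' ▸ mul_le_mul_of_nonneg_left (hull hw) h⟩
  · rw [abs_of_nonpos h]
    exact abs_le'.2 ⟨by linarith [mul_le_mul_of_nonpos_left (hull hw) h],
      by linarith [mul_le_mul_of_nonpos_left (hull hz) h]⟩

lemma taxicabNorm_sub_le_of_subset_smul_convexHull {a b c : R × R} {lam : R}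
    (hsum : a + b + c = 0) (hsub : Set.Icc (-1) 1 ⊆ lam • convexHull R {a, b, c}) :
    taxicabNorm (a - b) ≤ |lam| * |planeCross a b| := by
  obtain ⟨q, hq, hpq⟩ := exists_mem_Icc_planeCross_eq_taxicabNorm (a - b)
  have vertex : planeCross (a - b) a = planeCross a b ∧ planeCross (a - b) b = planeCross a b ∧
      planeCross (a - b) c = -2 * planeCross a b := by
    obtain rfl : c = -(a + b) := (neg_eq_of_add_eq_zero_right hsum).symm
    simp only [planeCross_apply, Prod.fst_neg, Prod.snd_neg, Prod.fst_add, Prod.snd_add,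
      Prod.fst_sub, Prod.snd_sub]
    refine ⟨?_, ?_, ?_⟩ <;> ring
  obtain ⟨ha, hb, hc⟩ := vertex
  have symm (p : R × R) (hp : p ∈ Set.Icc (-1) 1) : -p ∈ Set.Icc (-1) 1 := by
    rwa [Set.neg_mem_Icc_iff, neg_neg]
  rw [← hpq]
  refine (le_abs_self _).trans ?_
  rcases le_total 0 (planeCross a b) with h | h
  · rw [abs_of_nonneg h]
    refine abs_le_of_subset_smul_convexHull symm ?_ hsub hq
    rintro _ (rfl | rfl | rfl) <;> linarith
  · rw [abs_of_nonpos h, ← abs_neg, ← LinearMap.neg_apply]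
    refine abs_le_of_subset_smul_convexHull symm ?_ hsub hq
    rintro _ (rfl | rfl | rfl) <;> rw [LinearMap.neg_apply] <;> linarith

lemma taxicabNorm_sides_le_of_subset_smul_convexHull {a b c : R × R} {lam : R}
    (hsum : a + b + c = 0) (hsub : Set.Icc (-1) 1 ⊆ lam • convexHull R {a, b, c}) :
    taxicabNorm (a - b) ≤ |lam| * |planeCross a b| ∧
      taxicabNorm (b - c) ≤ |lam| * |planeCross a b| ∧
      taxicabNorm (c - a) ≤ |lam| * |planeCross a b| := by
  have hbca : b + c + a = 0 := by rw [← hsum]; ring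
  have hcab : c + a + b = 0 := by rw [← hsum]; ring
  have rotate (p q r : R × R) : ({p, q, r} : Set (R × R)) = {q, r, p} := by
    rw [Set.insert_comm, Set.pair_comm p r]
  refine ⟨taxicabNorm_sub_le_of_subset_smul_convexHull hsum hsub, ?_, ?_⟩
  · rw [← planeCross_rotate hsum]
    exact taxicabNorm_sub_le_of_subset_smul_convexHull hbca (rotate a b c ▸ hsub)
  · rw [planeCross_rotate hcab]
    exact taxicabNorm_sub_le_of_subset_smul_convexHull hcab (rotate c a b ▸ hsub)

lemma planeCross_ne_zero_of_subset_smul_convexHull {a b c : R × R} {lam : R}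
    (hsum : a + b + c = 0) (hsub : Set.Icc (-1) 1 ⊆ lam • convexHull R {a, b, c}) :
    planeCross a b ≠ 0 := by
  intro hzero
  obtain ⟨hab, hbc, -⟩ := taxicabNorm_sides_le_of_subset_smul_convexHull hsum hsub
  rw [hzero, abs_zero, mul_zero] at hab hbc
  obtain rfl := eq_of_taxicabNorm_sub_nonpos hab
  obtain rfl := eq_of_taxicabNorm_sub_nonpos hbc
  have ha : a.1 = 0 := by
    have hsum₁ : a.1 + a.1 + a.1 = 0 := congrArg Prod.fst hsum
    linarith
  have one_le : |(1 : R)| ≤ |lam| * 0 :=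
    abs_le_of_subset_smul_convexHull (f := LinearMap.fst R R R) (q := 1)
      (fun q hq => by rwa [Set.neg_mem_Icc_iff, neg_neg])
      (by rintro _ (rfl | rfl | rfl) <;> exact ha.le) hsub
      (mem_Icc_neg_one_one_iff_abs_le.2 ⟨abs_one.le, abs_one.le⟩)
  rw [abs_one, mul_zero] at one_le
  exact one_le.not_gt one_pos

end OrderedRing

section OrderedField

variable {𝕜 : Type*} [Field 𝕜] [LinearOrder 𝕜] [IsStrictOrderedRing 𝕜]

lemma five_halves_mul_mul_sub_mul_le {x y p r M : 𝕜} (hp : 0 ≤ p) (hpx : p ≤ x) (hx : x ≤ 1)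
    (hr : 0 ≤ r) (hry : r ≤ y) (hy : y ≤ 1) (h₁ : x + p + (y + r) ≤ M)
    (h₂ : 2 * x - p + (y - 2 * r) ≤ M) (h₃ : x - 2 * p + (2 * y - r) ≤ M) :
    5 / 2 * (x * y - p * r) ≤ M := by
  have hxy₁ : x * y ≤ x := mul_le_of_le_one_right (hp.trans hpx) hy
  have hxy₂ : x * y ≤ y := mul_le_of_le_one_left (hr.trans hry) hx
  rcases le_total (1 / 5) p with hp' | hp'
  · have h₁₂ : 3 * x + 2 * y - r ≤ 2 * M := by linarith
    linarith [h₁₂, mul_le_mul_of_nonneg_right hp' hr]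
  rcases le_total (1 / 5) r with hr' | hr'
  · have h₁₃ : 2 * x + 3 * y - p ≤ 2 * M := by linarith
    linarith [h₁₃, mul_le_mul_of_nonneg_left hr' hp]
  have h₂₃ : 3 * x + 3 * y - 3 * p - 3 * r ≤ 2 * M := by linarith
  -- The left side, affine in `x` and in `y`, is at most its value at `(p, r)`, which is the right
  -- side, or its value `-1` at `(1, 1)`.
  suffices 5 * (x * y) - 3 * x - 3 * y ≤ 5 * (p * r) - 3 * p - 3 * r by linarith [h₂₃]
  rcases le_total y (3 / 5) with hy' | hy'
  · calc 5 * (x * y) - 3 * x - 3 * y = (5 * y - 3) * x - 3 * y := by ring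
      _ ≤ (5 * y - 3) * p - 3 * y := by
        linarith [mul_le_mul_of_nonpos_left hpx (show 5 * y - 3 ≤ 0 by linarith)]
      _ = (5 * p - 3) * y - 3 * p := by ring
      _ ≤ (5 * p - 3) * r - 3 * p := by
        linarith [mul_le_mul_of_nonpos_left hry (show 5 * p - 3 ≤ 0 by linarith)]
      _ = 5 * (p * r) - 3 * p - 3 * r := by ring
  · calc 5 * (x * y) - 3 * x - 3 * y = (5 * y - 3) * x - 3 * y := by ring
      _ ≤ (5 * y - 3) * 1 - 3 * y := by
        linarith [mul_le_mul_of_nonneg_left hx (show 0 ≤ 5 * y - 3 by linarith)]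
      _ ≤ 5 * (p * r) - 3 * p - 3 * r := by
        linarith [mul_nonneg (sub_nonneg.2 hp') (sub_nonneg.2 hr')]

lemma five_halves_mul_abs_planeCross_le_of_abs_fst_eq_add_of_abs_snd_eq_add
    {a b c : 𝕜 × 𝕜} {M : 𝕜} (hsum : a + b + c = 0) (ha : |a.1| ≤ 1) (hb : |b.2| ≤ 1)
    (hab : taxicabNorm (a - b) ≤ M) (hbc : taxicabNorm (b - c) ≤ M)
    (hca : taxicabNorm (c - a) ≤ M)
    (h₁ : |a.1| = |b.1| + |c.1|) (h₂ : |b.2| = |c.2| + |a.2|) :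
    5 / 2 * |planeCross a b| ≤ M := by
  have hbca : b + c + a = 0 := by rw [← hsum]; ring
  have hcab : c + a + b = 0 := by rw [← hsum]; ring
  obtain ⟨hab₁, hca₁⟩ := abs_sub_eq_add_of_abs_eq_add (congrArg Prod.fst hsum) h₁
  obtain ⟨hbc₂, hab₂⟩ := abs_sub_eq_add_of_abs_eq_add (congrArg Prod.snd hbca) h₂
  have hbc₁ : |c.1| - |b.1| ≤ |b.1 - c.1| := abs_sub_comm b.1 c.1 ▸ abs_sub_abs_le_abs_sub _ _
  have hca₂ : |c.2| - |a.2| ≤ |c.2 - a.2| := abs_sub_abs_le_abs_sub _ _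
  simp only [taxicabNorm, Prod.fst_sub, Prod.snd_sub] at hab hbc hca
  have cross : |planeCross a b| ≤ |a.1| * |b.2| - |b.1| * |a.2| :=
    calc |planeCross a b| = |planeCross c a| := by rw [planeCross_rotate hcab]
      _ ≤ |c.1| * |a.2| + |c.2| * |a.1| := abs_planeCross_le c a
      _ = |a.1| * |b.2| - |b.1| * |a.2| := by rw [h₁, h₂]; ring
  calc 5 / 2 * |planeCross a b| ≤ 5 / 2 * (|a.1| * |b.2| - |b.1| * |a.2|) := by gcongr
    _ ≤ M := five_halves_mul_mul_sub_mul_le (abs_nonneg _) (by linarith [abs_nonneg c.1]) ha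
      (abs_nonneg _) (by linarith [abs_nonneg c.2]) hb (by linarith) (by linarith) (by linarith)

lemma five_halves_mul_abs_planeCross_le_of_abs_fst_eq_add {a b c : 𝕜 × 𝕜} {M : 𝕜}
    (hsum : a + b + c = 0)
    (ha : a ∈ Set.Icc (-1) 1) (hb : b ∈ Set.Icc (-1) 1) (hc : c ∈ Set.Icc (-1) 1)
    (hab : taxicabNorm (a - b) ≤ M) (hbc : taxicabNorm (b - c) ≤ M)
    (hca : taxicabNorm (c - a) ≤ M) (h₁ : |a.1| = |b.1| + |c.1|) :
    5 / 2 * |planeCross a b| ≤ M := by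
  rw [mem_Icc_neg_one_one_iff_abs_le] at ha hb hc
  rcases abs_eq_add_or_of_add_eq_zero (congrArg Prod.snd hsum) with h₂ | h₂ | h₂
  · linarith [three_mul_abs_planeCross_le_of_abs_eq_add hsum ha.1 ha.2 hab hca h₁ h₂,
      abs_nonneg (planeCross a b)]
  · exact five_halves_mul_abs_planeCross_le_of_abs_fst_eq_add_of_abs_snd_eq_add
      hsum ha.1 hb.2 hab hbc hca h₁ h₂
  · have hcab : c + a + b = 0 := by rw [← hsum]; ring
    have hacb : a + c + b = 0 := by rw [← hsum]; ring
    rw [taxicabNorm_sub_comm] at hab hbc hca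
    rw [planeCross_rotate hcab, ← neg_planeCross, abs_neg]
    exact five_halves_mul_abs_planeCross_le_of_abs_fst_eq_add_of_abs_snd_eq_add
      hacb ha.1 hc.2 hca hbc hab (by rwa [add_comm]) (by rwa [add_comm])

lemma five_halves_mul_abs_planeCross_le {a b c : 𝕜 × 𝕜} {M : 𝕜} (hsum : a + b + c = 0)
    (ha : a ∈ Set.Icc (-1) 1) (hb : b ∈ Set.Icc (-1) 1) (hc : c ∈ Set.Icc (-1) 1)
    (hab : taxicabNorm (a - b) ≤ M) (hbc : taxicabNorm (b - c) ≤ M)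
    (hca : taxicabNorm (c - a) ≤ M) : 5 / 2 * |planeCross a b| ≤ M := by
  have hbca : b + c + a = 0 := by rw [← hsum]; ring
  have hcab : c + a + b = 0 := by rw [← hsum]; ring
  rcases abs_eq_add_or_of_add_eq_zero (congrArg Prod.fst hsum) with h₁ | h₁ | h₁
  · exact five_halves_mul_abs_planeCross_le_of_abs_fst_eq_add hsum ha hb hc hab hbc hca h₁
  · rw [← planeCross_rotate hsum]
    exact five_halves_mul_abs_planeCross_le_of_abs_fst_eq_add hbca hb hc ha hbc hca hab h₁
  · rw [planeCross_rotate hcab]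
    exact five_halves_mul_abs_planeCross_le_of_abs_fst_eq_add hcab hc ha hb hca hab hbc h₁

theorem five_halves_le_abs_of_square_subset_smul_convexHull {a b c : 𝕜 × 𝕜} {lam : 𝕜}
    (ha : a ∈ Set.Icc (-1) 1) (hb : b ∈ Set.Icc (-1) 1) (hc : c ∈ Set.Icc (-1) 1)
    (hsum : a + b + c = 0) (hsub : Set.Icc (-1) 1 ⊆ lam • convexHull 𝕜 {a, b, c}) :
    5 / 2 ≤ |lam| := by
  obtain ⟨hab, hbc, hca⟩ := taxicabNorm_sides_le_of_subset_smul_convexHull hsum hsub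
  exact le_of_mul_le_mul_right (five_halves_mul_abs_planeCross_le hsum ha hb hc hab hbc hca)
    (abs_pos.2 (planeCross_ne_zero_of_subset_smul_convexHull hsum hsub))

theorem parallelogram_triangle_centroid_lower_bound_general {E : Type*} [AddCommGroup E]
    [Module 𝕜 E] {u v : E} (huv : LinearIndependent 𝕜 ![u, v]) {P : Set E}
    (hP : P = {p | ∃ s ∈ Set.Icc (-1 : 𝕜) 1, ∃ t ∈ Set.Icc (-1 : 𝕜) 1, p = s • u + t • v})
    {a b c : E} (ha : a ∈ P) (hb : b ∈ P) (hc : c ∈ P) (hsum : a + b + c = 0) {lam : 𝕜}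
    (hsub : P ⊆ lam • convexHull 𝕜 {a, b, c}) :
    5 / 2 ≤ |lam| := by
  let φ : 𝕜 × 𝕜 →ₗ[𝕜] E :=
    (LinearMap.toSpanSingleton 𝕜 E u).coprod (LinearMap.toSpanSingleton 𝕜 E v)
  have hφ : Function.Injective φ := (injective_iff_map_eq_zero φ).2 fun p hp =>
    Prod.ext_iff.2 (LinearIndependent.pair_iff.1 huv p.1 p.2 hp)
  have hPφ : P = φ '' Set.Icc (-1) 1 := by
    ext p
    rw [hP]
    constructor
    · rintro ⟨s, hs, t, ht, rfl⟩
      exact ⟨(s, t), ⟨⟨hs.1, ht.1⟩, ⟨hs.2, ht.2⟩⟩, rfl⟩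
    · rintro ⟨q, ⟨hq, hq'⟩, rfl⟩
      exact ⟨q.1, ⟨hq.1, hq'.1⟩, q.2, ⟨hq.2, hq'.2⟩, rfl⟩
  rw [hPφ] at ha hb hc
  obtain ⟨a, ha, rfl⟩ := ha
  obtain ⟨b, hb, rfl⟩ := hb
  obtain ⟨c, hc, rfl⟩ := hc
  refine five_halves_le_abs_of_square_subset_smul_convexHull ha hb hc
    (hφ (by rwa [map_add, map_add, map_zero])) ((Set.image_subset_image_iff hφ).1 ?_)
  rwa [← hPφ, image_smul_set, LinearMap.image_convexHull, Set.image_insert_eq, Set.image_pair]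

end OrderedField

theorem parallelogram_triangle_centroid_lower_bound
    (u v : ℝ × ℝ) (huv : LinearIndependent ℝ ![u, v])
    (P : Set (ℝ × ℝ))
    (hP : P = {p : ℝ × ℝ | ∃ s ∈ Set.Icc (-1 : ℝ) 1, ∃ t ∈ Set.Icc (-1 : ℝ) 1,
      p = s • u + t • v})
    (a b c : ℝ × ℝ) (ha : a ∈ P) (hb : b ∈ P) (hc : c ∈ P)
    (hsum : a + b + c = 0)
    (lam : ℝ) (hlam : 0 < lam)
    (hsub : P ⊆ lam • convexHull ℝ {a, b, c}) :
    lam ≥ 5 / 2 :=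
  abs_of_pos hlam ▸
    parallelogram_triangle_centroid_lower_bound_general huv hP ha hb hc hsum hsub
end

section
/- For every α ∈ (0,1] and every β ∈ [-α, 1-α], at least one of the following holds: (i) the straight line through the points (5/2, 5α/2) and (0, -5α/2 - 5β/2) intersects the segment from (-1,-1) to (1,-1); or (ii) the straight line through the points (-5/2, 5β/2) and (0, -5α/2 - 5β/2) intersects the segment from (-1,-1) to (-1,1). -/
/-!
A segment meets a line exactly when its endpoints are not strictly on the same side of the line, so
each alternative is a condition on two corners of the square. With `s = 3 * α + β` and
`t = α + β ∈ [0, 1]`, the line through the left vertex meets the left side iff `|s| ≤ 2`, and the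
line through the right vertex meets the bottom side iff `2` lies between `4 * t - s` and
`s + 6 * t`, which holds as soon as `2 < s`.
-/

/-- The signed area of the parallelogram spanned by `q - p` and `r - p`, as an affine function of
`r`: its sign tells on which side of the line through `p` and `q` the point `r` lies. -/
def lineSide {K : Type*} [CommRing K] (p q : K × K) : K × K →ᵃ[K] K :=
  (q.1 - p.1) • (AffineMap.snd - AffineMap.const K (K × K) p.2) -
    (q.2 - p.2) • (AffineMap.fst - AffineMap.const K (K × K) p.1)

theorem lineSide_apply {K : Type*} [CommRing K] (p q r : K × K) :
    lineSide p q r = (q.1 - p.1) * (r.2 - p.2) - (q.2 - p.2) * (r.1 - p.1) :=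
  rfl

theorem mem_affineSpan_pair_iff_lineSide_eq_zero {K : Type*} [Field K] {p q r : K × K}
    (hpq : p ≠ q) : r ∈ affineSpan K {p, q} ↔ lineSide p q r = 0 := by
  have h_param : r ∈ affineSpan K {p, q} ↔ ∃ c : K,
      c * (q.1 - p.1) = r.1 - p.1 ∧ c * (q.2 - p.2) = r.2 - p.2 := by
    simp only [mem_affineSpan_pair_iff_exists_lineMap_eq, Prod.ext_iff,
      AffineMap.fst_lineMap, AffineMap.snd_lineMap, AffineMap.lineMap_apply_ring',
      eq_sub_iff_add_eq]
  rw [h_param, lineSide_apply]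
  constructor
  · rintro ⟨c, h₁, h₂⟩
    rw [← h₁, ← h₂]
    ring
  · intro hr
    obtain h₁ | h₂ : q.1 - p.1 ≠ 0 ∨ q.2 - p.2 ≠ 0 := by
      contrapose! hpq
      exact Prod.ext (sub_eq_zero.mp hpq.1).symm (sub_eq_zero.mp hpq.2).symm
    · refine ⟨(r.1 - p.1) / (q.1 - p.1), div_mul_cancel₀ _ h₁, ?_⟩
      field_simp
      linear_combination -hr
    · refine ⟨(r.2 - p.2) / (q.2 - p.2), ?_, div_mul_cancel₀ _ h₂⟩
      field_simp
      linear_combination hr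

theorem affineSpan_pair_inter_segment_nonempty_iff {K : Type*} [Field K] [LinearOrder K]
    [IsStrictOrderedRing K] {p q : K × K} (hpq : p ≠ q) (a b : K × K) :
    ((affineSpan K {p, q} : Set (K × K)) ∩ segment K a b).Nonempty ↔
      0 ∈ Set.uIcc (lineSide p q a) (lineSide p q b) := by
  rw [← segment_eq_uIcc, ← image_segment]
  simp only [Set.Nonempty, Set.mem_inter_iff, SetLike.mem_coe, Set.mem_image,
    mem_affineSpan_pair_iff_lineSide_eq_zero hpq, and_comm]

theorem right_line_inter_bottom_nonempty_iff (α β : ℝ) :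
    ((affineSpan ℝ {((5 / 2 : ℝ), 5 * α / 2), ((0 : ℝ), -5 * α / 2 - 5 * β / 2)} : Set (ℝ × ℝ))
        ∩ segment ℝ ((-1, -1) : ℝ × ℝ) (1, -1)).Nonempty ↔
      2 ∈ Set.uIcc (α + 3 * β) (9 * α + 7 * β) := by
  rw [affineSpan_pair_inter_segment_nonempty_iff (by simp), lineSide_apply, lineSide_apply,
    Set.mem_uIcc, Set.mem_uIcc]
  constructor <;> rintro (⟨h₁, h₂⟩ | ⟨h₁, h₂⟩)
  · exact .inl ⟨by linarith, by linarith⟩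
  · exact .inr ⟨by linarith, by linarith⟩
  · exact .inl ⟨by linarith, by linarith⟩
  · exact .inr ⟨by linarith, by linarith⟩

theorem left_line_inter_left_side_nonempty_iff (α β : ℝ) :
    ((affineSpan ℝ {((-5 / 2 : ℝ), 5 * β / 2), ((0 : ℝ), -5 * α / 2 - 5 * β / 2)} : Set (ℝ × ℝ))
        ∩ segment ℝ ((-1, -1) : ℝ × ℝ) (-1, 1)).Nonempty ↔
      |3 * α + β| ≤ 2 := by
  rw [affineSpan_pair_inter_segment_nonempty_iff (by simp), lineSide_apply, lineSide_apply,
    Set.mem_uIcc, abs_le]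
  constructor
  · rintro (⟨h₁, h₂⟩ | ⟨h₁, h₂⟩) <;> constructor <;> linarith
  · rintro ⟨h₁, h₂⟩
    exact .inl ⟨by linarith, by linarith⟩

theorem covering_assertion_subcase_one_one_general
    (α β : ℝ) (hαβ : -2 ≤ 3 * α + β) (hβ : β ∈ Set.Icc (-α) (1 - α)) :
    ((affineSpan ℝ {((5 / 2 : ℝ), 5 * α / 2), ((0 : ℝ), -5 * α / 2 - 5 * β / 2)} : Set (ℝ × ℝ))
        ∩ segment ℝ ((-1, -1) : ℝ × ℝ) (1, -1)).Nonempty ∨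
    ((affineSpan ℝ {((-5 / 2 : ℝ), 5 * β / 2), ((0 : ℝ), -5 * α / 2 - 5 * β / 2)} : Set (ℝ × ℝ))
        ∩ segment ℝ ((-1, -1) : ℝ × ℝ) (-1, 1)).Nonempty := by
  rw [right_line_inter_bottom_nonempty_iff, left_line_inter_left_side_nonempty_iff]
  obtain ⟨hβ_lower, hβ_upper⟩ := hβ
  obtain h_le | h_gt := le_or_gt (3 * α + β) 2
  · exact .inr (abs_le.mpr ⟨hαβ, h_le⟩)
  · have h_right : α + 3 * β ≤ 2 := by linarith
    have h_left : 2 ≤ 9 * α + 7 * β := by linarith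
    exact .inl (Set.mem_uIcc_of_le h_right h_left)

theorem covering_assertion_subcase_one_one
    (α β : ℝ) (hα : α ∈ Set.Ioc (0 : ℝ) 1) (hβ : β ∈ Set.Icc (-α) (1 - α)) :
    ((affineSpan ℝ {((5 / 2 : ℝ), 5 * α / 2), ((0 : ℝ), -5 * α / 2 - 5 * β / 2)} : Set (ℝ × ℝ))
        ∩ segment ℝ ((-1, -1) : ℝ × ℝ) (1, -1)).Nonempty ∨
    ((affineSpan ℝ {((-5 / 2 : ℝ), 5 * β / 2), ((0 : ℝ), -5 * α / 2 - 5 * β / 2)} : Set (ℝ × ℝ))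
        ∩ segment ℝ ((-1, -1) : ℝ × ℝ) (-1, 1)).Nonempty :=
  covering_assertion_subcase_one_one_general α β (by linarith [hα.1, hβ.1]) hβ
end
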